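/- Let β > 0, let (x_k)_{k≥1} be nonnegative differentiable functions on [0,∞) with x_k(0) = 0, and let (r_k)_{k≥1}, (α_k)_{k≥1} be constants with r_k ≥ 0 and α_k > 0, such that for every k ≥ 1 and every t ≥ 0 one has x_k'(t) ≤ β·k·(α_k·x_{k+1}(t) − x_k(t)) + r_k. Then for all 0 ≤ t₀ ≤ t and all integers j ≥ 1, ℓ ≥ 1 with j ≤ e^{-2βt-6}·ℓ, one has x_j(t) ≤ A^ℓ_j · exp(−e^{-2β(t−t₀)−3}·ℓ) · sup_{s ∈ [t₀,t]} x_{j+ℓ}(s) + A^ℓ_j · e^{2βt+7} · exp(−e^{-2βt−7}·ℓ) · sup_{s ∈ [0,t₀]} x_{j+ℓ}(s) + (1/β) · Σ_{k=0}^{ℓ-1} A^{k+1}_j · I^{k+1}_j(t) · r_{j+k} / (α_{j+k}·(j+k)), where A^k_j := Π_{i=j}^{j+k-1} α_i (with A^0_j := 1). -/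

import Mathlib

open MeasureTheory

/-- The nested integral `∫₀^t ∫₀^{s_ℓ} ⋯ ∫₀^{s_2} e^{-β(s_2+⋯+s_ℓ)} e^{a s_1} ds_1 ⋯ ds_ℓ`,
defined recursively in the number `ℓ` of integrations. -/
noncomputable def nestInt (β a : ℝ) : ℕ → ℝ → ℝ
  | 0, _ => 1
  | 1, t => ∫ s in (0:ℝ)..t, Real.exp (a * s)
  | (n + 2), t => ∫ s in (0:ℝ)..t, Real.exp (-β * s) * nestInt β a (n + 1) s

/-- The iterated exponential integral
`I^ℓ_j(t) = β^ℓ ((j+ℓ-1)!/(j-1)!) e^{-βjt} ∫₀^t ∫₀^{s_ℓ} ⋯ ∫₀^{s_2}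
e^{-β(s_2+⋯+s_ℓ)} e^{β(j+ℓ-1)s_1} ds_1 ⋯ ds_ℓ`, with `I^0_j(t) = 1`. -/
noncomputable def Iex (β : ℝ) (j ℓ : ℕ) (t : ℝ) : ℝ :=
  if ℓ = 0 then 1
  else β ^ ℓ * ((Nat.factorial (j + ℓ - 1) : ℝ) / (Nat.factorial (j - 1) : ℝ)) *
    Real.exp (-(β * j * t)) * nestInt β (β * ((j : ℝ) + (ℓ : ℝ) - 1)) ℓ t

theorem nestInt_continuous (β a : ℝ) (n : ℕ) : Continuous (nestInt β a n) := by
  induction n using Nat.twoStepInduction with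
  | zero =>
    have : nestInt β a 0 = fun _ => 1 := by funext t; simp [nestInt]
    rw [this]; exact continuous_const
  | one =>
    have : nestInt β a 1 = fun t => ∫ s in (0:ℝ)..t, Real.exp (a * s) := by
      funext t; simp only [nestInt]
    rw [this]
    exact intervalIntegral.continuous_primitive
      (fun _ _ => (by fun_prop : Continuous fun s : ℝ => Real.exp (a * s)).intervalIntegrable _ _) 0
  | more n _ ih =>
    have : nestInt β a (n + 2) =
        fun t => ∫ s in (0:ℝ)..t, Real.exp (-β * s) * nestInt β a (n + 1) s := by
      funext t; simp only [nestInt]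
    rw [this]
    exact intervalIntegral.continuous_primitive
      (fun _ _ => (by fun_prop : Continuous fun s : ℝ =>
        Real.exp (-β * s) * nestInt β a (n + 1) s).intervalIntegrable _ _) 0

theorem nestInt_deriv_one (β a s : ℝ) : HasDerivAt (nestInt β a 1) (Real.exp (a * s)) s := by
  have : nestInt β a 1 = fun t => ∫ s in (0:ℝ)..t, Real.exp (a * s) := by
    funext t; simp only [nestInt]
  rw [this]
  exact (by fun_prop : Continuous fun s : ℝ => Real.exp (a * s)).integral_hasStrictDerivAt 0 s
    |>.hasDerivAt

theorem nestInt_deriv_succ (β a s : ℝ) (n : ℕ) : HasDerivAt (nestInt β a (n + 2))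
    (Real.exp (-β * s) * nestInt β a (n + 1) s) s := by
  have : nestInt β a (n + 2) =
      fun t => ∫ s in (0:ℝ)..t, Real.exp (-β * s) * nestInt β a (n + 1) s := by
    funext t; simp only [nestInt]
  rw [this]
  have hc := nestInt_continuous β a (n + 1)
  exact (by fun_prop : Continuous fun s : ℝ =>
    Real.exp (-β * s) * nestInt β a (n + 1) s).integral_hasStrictDerivAt 0 s |>.hasDerivAt

theorem nestInt_zero_right (β a : ℝ) (n : ℕ) : nestInt β a (n + 1) 0 = 0 := by
  cases n <;> simp [nestInt]

theorem Iex_zero (β : ℝ) (j : ℕ) (s : ℝ) : Iex β j 0 s = 1 := by simp [Iex]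

theorem Iex_init (β : ℝ) (j ℓ : ℕ) : Iex β j (ℓ + 1) 0 = 0 := by
  simp [Iex, nestInt_zero_right]

theorem Iex_deriv (β : ℝ) (j ℓ : ℕ) (hj : 1 ≤ j) (s : ℝ) :
    HasDerivAt (Iex β j (ℓ + 1)) (β * j * (Iex β (j + 1) ℓ s - Iex β j (ℓ + 1) s)) s := by
  obtain ⟨i, rfl⟩ : ∃ i, j = i + 1 := ⟨j - 1, by omega⟩
  have hfun : Iex β (i + 1) (ℓ + 1) = fun t => β ^ (ℓ + 1) *
      ((Nat.factorial (i + 1 + ℓ) : ℝ) / (Nat.factorial i : ℝ)) *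
      Real.exp (-(β * (i + 1 : ℕ) * t)) * nestInt β (β * ((i + 1 : ℕ) + ℓ : ℝ)) (ℓ + 1) t := by
    funext t
    have h1 : i + 1 + (ℓ + 1) - 1 = i + 1 + ℓ := by omega
    have h2 : β * (((i + 1 : ℕ) : ℝ) + ((ℓ + 1 : ℕ) : ℝ) - 1) = β * ((i + 1 : ℕ) + ℓ : ℝ) := by
      push_cast; ring
    simp only [Iex, if_neg (Nat.succ_ne_zero ℓ), h1, h2, Nat.add_sub_cancel]
  have he : HasDerivAt (fun t : ℝ => Real.exp (-(β * (i + 1 : ℕ) * t)))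
      (Real.exp (-(β * (i + 1 : ℕ) * s)) * (-(β * (i + 1 : ℕ)))) s := by
    have := (((hasDerivAt_id s).const_mul (β * (i + 1 : ℕ))).neg).exp
    simpa using this
  have hfac : (Nat.factorial i : ℝ) ≠ 0 := by positivity
  have hfs : (Nat.factorial (i + 1) : ℝ) = (i + 1 : ℕ) * Nat.factorial i := by
    rw [Nat.factorial_succ]; push_cast; ring
  have hi : ((i + 1 : ℕ) : ℝ) ≠ 0 := by positivity
  cases ℓ with
  | zero =>
    have hn := nestInt_deriv_one β (β * ((i + 1 : ℕ) + (0 : ℕ) : ℝ)) s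
    have := (he.const_mul (β ^ (0 + 1) *
      ((Nat.factorial (i + 1 + 0) : ℝ) / (Nat.factorial i : ℝ)))).mul hn
    rw [hfun, Iex_zero]
    refine this.congr_deriv ?_
    have hx : Real.exp (-(β * (i + 1 : ℕ) * s)) * Real.exp (β * ((i + 1 : ℕ) + (0 : ℕ) : ℝ) * s) = 1 := by
      rw [← Real.exp_add, Real.exp_eq_one_iff]; push_cast; ring
    simp only [add_zero, zero_add, hfs] at *
    have hd : ((i + 1 : ℕ) : ℝ) * Nat.factorial i / Nat.factorial i = (i + 1 : ℕ) := by
      field_simp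
    rw [hd]
    linear_combination (β * ((i + 1 : ℕ) : ℝ)) * hx
  | succ n =>
    have hn := nestInt_deriv_succ β (β * ((i + 1 : ℕ) + (n + 1 : ℕ) : ℝ)) s n
    have := (he.const_mul (β ^ (n + 1 + 1) *
      ((Nat.factorial (i + 1 + (n + 1)) : ℝ) / (Nat.factorial i : ℝ)))).mul hn
    have hG : Iex β (i + 1 + 1) (n + 1) s = β ^ (n + 1) *
      ((Nat.factorial (i + 1 + (n + 1)) : ℝ) / (Nat.factorial (i + 1) : ℝ)) *
      (Real.exp (-(β * (i + 1 : ℕ) * s)) * Real.exp (-β * s)) *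
        nestInt β (β * ((i + 1 : ℕ) + (n + 1 : ℕ) : ℝ)) (n + 1) s := by
      have h1 : i + 1 + 1 + (n + 1) - 1 = i + 1 + (n + 1) := by omega
      have h2 : β * (((i + 1 + 1 : ℕ) : ℝ) + ((n + 1 : ℕ) : ℝ) - 1)
          = β * ((i + 1 : ℕ) + (n + 1 : ℕ) : ℝ) := by
        push_cast; ring
      have h3 : Real.exp (-(β * (i + 1 : ℕ) * s)) * Real.exp (-β * s)
          = Real.exp (-(β * (i + 1 + 1 : ℕ) * s)) := by
        rw [← Real.exp_add]; congr 1; push_cast; ring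
      rw [h3]
      simp only [Iex, if_neg (Nat.succ_ne_zero n), h1, h2, Nat.add_sub_cancel]
    rw [hG, hfun]
    refine this.congr_deriv ?_
    rw [hfs]
    field_simp
    ring

theorem cmp_one (a b c : ℝ) (w w' : ℝ → ℝ) (h0 : 0 ≤ w a)
    (hd : ∀ s ∈ Set.Icc a b, HasDerivWithinAt w (w' s) (Set.Ici a) s)
    (hw : ∀ s ∈ Set.Icc a b, -(c * w s) ≤ w' s) : ∀ s ∈ Set.Icc a b, 0 ≤ w s := by
  intro s hs
  have he : ∀ u, HasDerivAt (fun u : ℝ => Real.exp (c * u)) (Real.exp (c * u) * c) u := by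
    intro u
    simpa using ((hasDerivAt_id u).const_mul c).exp
  have hD : ∀ u ∈ Set.Icc a b, HasDerivWithinAt (fun u => Real.exp (c * u) * w u)
      (Real.exp (c * u) * c * w u + Real.exp (c * u) * w' u) (Set.Ici a) u :=
    fun u hu => (he u).hasDerivWithinAt.mul (hd u hu)
  have hmono : MonotoneOn (fun u => Real.exp (c * u) * w u) (Set.Icc a b) := by
    refine monotoneOn_of_hasDerivWithinAt_nonneg (convex_Icc a b)
      (f' := fun u => Real.exp (c * u) * c * w u + Real.exp (c * u) * w' u) ?_ ?_ ?_
    · intro u hu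
      exact ((hD u hu).mono Set.Icc_subset_Ici_self).continuousWithinAt
    · intro u hu
      have hu' := interior_subset hu
      exact (hD u hu').mono (interior_subset.trans Set.Icc_subset_Ici_self)
    · intro u hu
      have hu' := interior_subset hu
      have := mul_le_mul_of_nonneg_left (hw u hu') (Real.exp_pos (c * u)).le
      linarith
  have h1 := hmono (Set.left_mem_Icc.2 (hs.1.trans hs.2)) hs hs.1
  have h2 : 0 ≤ Real.exp (c * a) * w a := mul_nonneg (Real.exp_pos _).le h0
  exact nonneg_of_mul_nonneg_right (h2.trans h1) (Real.exp_pos _)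

theorem cmp_hier (β : ℝ) (hβ : 0 < β) (a b : ℝ) (N : ℕ) (r α : ℕ → ℝ)
    (hα : ∀ k, 1 ≤ k → 0 < α k) (X X' U : ℕ → ℕ → ℝ → ℝ)
    (hbase : ∀ s ∈ Set.Icc a b, X N 0 s ≤ U N 0 s)
    (hinit : ∀ j ℓ, 1 ≤ j → j + (ℓ + 1) = N → X j (ℓ + 1) a ≤ U j (ℓ + 1) a)
    (hX : ∀ j ℓ, 1 ≤ j → j + (ℓ + 1) = N → ∀ s ∈ Set.Icc a b,
      HasDerivWithinAt (X j (ℓ + 1)) (X' j (ℓ + 1) s) (Set.Ici a) s)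
    (hX' : ∀ j ℓ, 1 ≤ j → j + (ℓ + 1) = N → ∀ s ∈ Set.Icc a b,
      X' j (ℓ + 1) s ≤ β * j * (α j * X (j + 1) ℓ s - X j (ℓ + 1) s) + r j)
    (hU : ∀ j ℓ, 1 ≤ j → j + (ℓ + 1) = N → ∀ s ∈ Set.Icc a b, HasDerivAt (U j (ℓ + 1))
      (β * j * (α j * U (j + 1) ℓ s - U j (ℓ + 1) s) + r j) s)
    (ℓ : ℕ) : ∀ j, 1 ≤ j → j + ℓ = N → ∀ s ∈ Set.Icc a b, X j ℓ s ≤ U j ℓ s := by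
  induction ℓ with
  | zero => intro j _ hN; simp only [add_zero] at hN; subst hN; exact hbase
  | succ ℓ ih =>
    intro j hj hN s hs
    have := cmp_one a b (β * j) (fun s => U j (ℓ + 1) s - X j (ℓ + 1) s)
      (fun s => (β * j * (α j * U (j + 1) ℓ s - U j (ℓ + 1) s) + r j) - X' j (ℓ + 1) s)
      (sub_nonneg.2 (hinit j ℓ hj hN))
      (fun s hs => ((hU j ℓ hj hN s hs).hasDerivWithinAt).sub (hX j ℓ hj hN s hs)) ?_ s hs
    · exact sub_nonneg.1 this
    · intro u hu
      have h1 := hX' j ℓ hj hN u hu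
      have h2 := ih (j + 1) (by omega) (by omega) u hu
      have h3 : 0 ≤ β * j * α j := by have := hα j hj; positivity
      have h4 := mul_le_mul_of_nonneg_left h2 h3
      linarith

theorem Iex_le (β : ℝ) (hβ : 0 < β) (j ℓ : ℕ) (hj : 1 ≤ j) (τ : ℝ) (hτ : 0 ≤ τ) :
    Iex β j ℓ τ ≤ (1 - Real.exp (-(β * τ)) / 2) ^ (j + ℓ) * 2 ^ j := by
  set p := Real.exp (-(β * τ)) with hp
  have hp0 : 0 < p := Real.exp_pos _
  have hp1 : p ≤ 1 := Real.exp_le_one_iff.2 (by have := mul_nonneg hβ.le hτ; linarith)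
  have hq : ∀ s ∈ Set.Icc 0 τ, p ≤ Real.exp (-(β * s)) := fun s hs =>
    Real.exp_le_exp.2 (by have := mul_le_mul_of_nonneg_left hs.2 hβ.le; linarith)
  have hq1 : ∀ s ∈ Set.Icc 0 τ, Real.exp (-(β * s)) ≤ 1 := fun s hs =>
    Real.exp_le_one_iff.2 (by have := mul_nonneg hβ.le hs.1; linarith)
  have key := cmp_hier β hβ 0 τ (j + ℓ) (fun _ => 0) (fun _ => 1) (fun _ _ => one_pos)
    (fun j ℓ s => Iex β j ℓ s)
    (fun j ℓ s => β * j * (Iex β (j + 1) (ℓ - 1) s - Iex β j ℓ s))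
    (fun j ℓ s => (1 - p / 2) ^ (j + ℓ) *
      (Real.exp (-(β * s)) / (Real.exp (-(β * s)) - p / 2)) ^ j)
    ?_ ?_ ?_ ?_ ?_ ℓ j hj rfl τ ⟨hτ, le_rfl⟩
  · have h2 : p / (p - p / 2) = 2 := by field_simp; norm_num
    simp only [← hp, h2] at key
    exact key
  · intro s hs
    have h1 := hq s hs
    have h2 := hq1 s hs
    simp only [Iex_zero, add_zero]
    rw [← mul_pow]
    apply one_le_pow₀
    rw [← mul_div_assoc, le_div_iff₀ (by linarith)]
    nlinarith
  · intro j ℓ hj _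
    simp only [Iex_init]
    have : 0 ≤ 1 - p / 2 := by linarith
    have h1 := hq 0 ⟨le_rfl, hτ⟩
    have : 0 ≤ Real.exp (-(β * 0)) - p / 2 := by linarith
    positivity
  · intro j ℓ hj _ s hs
    exact (Iex_deriv β j ℓ hj s).hasDerivWithinAt
  · intro j ℓ hj _ s hs
    simp
  · intro j ℓ hj _ s hs
    have h1 := hq s hs
    have he : HasDerivAt (fun t : ℝ => Real.exp (-(β * t))) (Real.exp (-(β * s)) * (-β)) s := by
      simpa using ((hasDerivAt_id s).const_mul β).neg.exp
    have hne : Real.exp (-(β * s)) - p / 2 ≠ 0 := by linarith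
    have := ((he.div (he.sub_const (p / 2)) hne).pow j).const_mul ((1 - p / 2) ^ (j + (ℓ + 1)))
    refine this.congr_deriv ?_
    obtain ⟨i, rfl⟩ : ∃ i, j = i + 1 := ⟨j - 1, by omega⟩
    have e : i + 1 + 1 + ℓ = i + 1 + (ℓ + 1) := by omega
    simp only [e, Nat.add_sub_cancel, Pi.div_apply]
    generalize Real.exp (-(β * s)) = q at *
    generalize (1 - p / 2) ^ (i + 1 + (ℓ + 1)) = V
    rw [pow_succ (q / (q - p / 2)) (i + 1), pow_succ (q / (q - p / 2)) i]
    generalize (q / (q - p / 2)) ^ i = W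
    field_simp
    ring

theorem Iex_exp_le (β : ℝ) (hβ : 0 < β) (j ℓ : ℕ) (hj : 1 ≤ j) (t τ : ℝ) (hτ : 0 ≤ τ)
    (hτt : τ ≤ t) (hjl : (j : ℝ) ≤ Real.exp (-(2 * β * t) - 6) * (ℓ : ℝ)) :
    Iex β j ℓ τ ≤ Real.exp (-(Real.exp (-(2 * β * τ) - 3) * (ℓ : ℝ))) := by
  refine (Iex_le β hβ j ℓ hj τ hτ).trans ?_
  set p := Real.exp (-(β * τ)) with hp
  have hp0 : 0 < p := Real.exp_pos _
  have hp1 : p ≤ 1 := Real.exp_le_one_iff.2 (by have := mul_nonneg hβ.le hτ; linarith)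
  have hv : 1 - p / 2 ≤ Real.exp (-(p / 2)) := by
    have := Real.add_one_le_exp (-(p / 2)); linarith
  have h2 : (2 : ℝ) ≤ Real.exp 1 := by have := Real.add_one_le_exp (1 : ℝ); linarith
  have e3 : Real.exp (-3) ≤ 1 / 8 := by
    have : Real.exp (-3) = (Real.exp 1 ^ 3)⁻¹ := by
      rw [← Real.exp_nat_mul, ← Real.exp_neg]; norm_num
    rw [this, one_div]
    apply inv_anti₀ (by norm_num)
    calc (8 : ℝ) = 2 ^ 3 := by norm_num
      _ ≤ _ := by gcongr
  have e6 : Real.exp (-6) ≤ 1 / 8 := (Real.exp_le_exp.2 (by norm_num)).trans e3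
  have hp3 : Real.exp (-(2 * β * τ) - 3) = p ^ 2 * Real.exp (-3) := by
    rw [hp, ← Real.exp_nat_mul, ← Real.exp_add]; congr 1; push_cast; ring
  have hp6 : Real.exp (-(2 * β * t) - 6) ≤ p ^ 2 * Real.exp (-6) := by
    rw [hp, ← Real.exp_nat_mul, ← Real.exp_add]
    apply Real.exp_le_exp.2
    have := mul_le_mul_of_nonneg_left hτt hβ.le
    push_cast; linarith
  have hl : (0 : ℝ) ≤ ℓ := Nat.cast_nonneg _
  calc (1 - p / 2) ^ (j + ℓ) * 2 ^ j ≤ (1 - p / 2) ^ ℓ * 2 ^ j := by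
        gcongr ?_ * _
        exact pow_le_pow_of_le_one (by linarith) (by linarith) (by omega)
    _ ≤ Real.exp (-(p / 2)) ^ ℓ * Real.exp 1 ^ j := by
        gcongr
        linarith
    _ = Real.exp (ℓ * (-(p / 2)) + j * 1) := by
        rw [← Real.exp_nat_mul, ← Real.exp_nat_mul, ← Real.exp_add]
    _ ≤ _ := by
        apply Real.exp_le_exp.2
        rw [hp3]
        have a1 := hjl.trans (mul_le_mul_of_nonneg_right hp6 hl)
        have a2 : p ^ 2 * Real.exp (-6) ≤ p * (1 / 8) := by
          apply mul_le_mul _ e6 (Real.exp_pos _).le hp0.le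
          nlinarith
        have a3 : p ^ 2 * Real.exp (-3) ≤ p * (1 / 8) := by
          apply mul_le_mul _ e3 (Real.exp_pos _).le hp0.le
          nlinarith
        have a4 := mul_le_mul_of_nonneg_right a2 hl
        have a5 := mul_le_mul_of_nonneg_right a3 hl
        have a6 := mul_nonneg hp0.le hl
        linarith

/-- The remainder term. -/
noncomputable def Rem (β : ℝ) (r α : ℕ → ℝ) (j ℓ : ℕ) (s : ℝ) : ℝ :=
  (1 / β) * ∑ k ∈ Finset.range ℓ,
    (∏ i ∈ Finset.range (k + 1), α (j + i)) * Iex β j (k + 1) s *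
      (r (j + k) / (α (j + k) * ((j : ℝ) + k)))

theorem Rem_init (β : ℝ) (r α : ℕ → ℝ) (j ℓ : ℕ) : Rem β r α j ℓ 0 = 0 := by
  simp [Rem, Iex_init]

theorem prod_shift (α : ℕ → ℝ) (j ℓ : ℕ) : ∏ i ∈ Finset.range (ℓ + 1), α (j + i)
    = α j * ∏ i ∈ Finset.range ℓ, α (j + 1 + i) := by
  rw [Finset.prod_range_succ', mul_comm, add_zero]
  congr 1
  refine Finset.prod_congr rfl fun i _ => ?_
  congr 1; omega

theorem Rem_deriv (β : ℝ) (hβ : 0 < β) (r α : ℕ → ℝ) (hα : ∀ k, 1 ≤ k → 0 < α k)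
    (j ℓ : ℕ) (hj : 1 ≤ j) (s : ℝ) : HasDerivAt (Rem β r α j (ℓ + 1))
      (β * j * (α j * Rem β r α (j + 1) ℓ s - Rem β r α j (ℓ + 1) s) + r j) s := by
  have h := (HasDerivAt.fun_sum (u := Finset.range (ℓ + 1)) fun k _ =>
    ((Iex_deriv β j k hj s).const_mul (∏ i ∈ Finset.range (k + 1), α (j + i))).mul_const
      (r (j + k) / (α (j + k) * ((j : ℝ) + k)))).const_mul (1 / β)
  refine (show HasDerivAt (Rem β r α j (ℓ + 1)) _ s from h).congr_deriv ?_
  have hs : ∑ k ∈ Finset.range (ℓ + 1), (∏ i ∈ Finset.range (k + 1), α (j + i)) *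
      Iex β (j + 1) k s * (r (j + k) / (α (j + k) * ((j : ℝ) + k)))
      = α j * (∑ k ∈ Finset.range ℓ, (∏ i ∈ Finset.range (k + 1), α (j + 1 + i)) *
      Iex β (j + 1) (k + 1) s * (r (j + 1 + k) / (α (j + 1 + k) * (((j + 1 : ℕ) : ℝ) + k))))
      + r j / j := by
    rw [Finset.sum_range_succ', Finset.mul_sum]
    congr 1
    · refine Finset.sum_congr rfl fun k _ => ?_
      have e1 : j + (k + 1) = j + 1 + k := by omega
      rw [prod_shift, e1]
      push_cast
      rw [show (j : ℝ) + (k + 1) = j + 1 + k by ring]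
      ring
    · have := hα j hj
      have hj' : (j : ℝ) ≠ 0 := by positivity
      simp [Iex_zero]
      field_simp
  have hsplit : ∑ k ∈ Finset.range (ℓ + 1), (∏ i ∈ Finset.range (k + 1), α (j + i)) *
      (β * j * (Iex β (j + 1) k s - Iex β j (k + 1) s)) *
      (r (j + k) / (α (j + k) * ((j : ℝ) + k)))
      = β * j * (∑ k ∈ Finset.range (ℓ + 1), (∏ i ∈ Finset.range (k + 1), α (j + i)) *
      Iex β (j + 1) k s * (r (j + k) / (α (j + k) * ((j : ℝ) + k))) -
      ∑ k ∈ Finset.range (ℓ + 1), (∏ i ∈ Finset.range (k + 1), α (j + i)) *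
      Iex β j (k + 1) s * (r (j + k) / (α (j + k) * ((j : ℝ) + k)))) := by
    rw [← Finset.sum_sub_distrib, Finset.mul_sum]
    refine Finset.sum_congr rfl fun k _ => ?_
    ring
  rw [hsplit, hs]
  unfold Rem
  have hj' : (j : ℝ) ≠ 0 := by positivity
  field_simp
  ring

/-- The supersolution. -/
noncomputable def Sup (β : ℝ) (r α : ℕ → ℝ) (M₁ M₀ t₀ : ℝ) (j ℓ : ℕ) (s : ℝ) : ℝ :=
  (∏ i ∈ Finset.range ℓ, α (j + i)) * (M₁ * Iex β j ℓ (s - t₀) + M₀ * Iex β j ℓ s)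
    + Rem β r α j ℓ s

theorem Sup_deriv (β : ℝ) (hβ : 0 < β) (r α : ℕ → ℝ) (hα : ∀ k, 1 ≤ k → 0 < α k)
    (M₁ M₀ t₀ : ℝ) (j ℓ : ℕ) (hj : 1 ≤ j) (s : ℝ) :
    HasDerivAt (Sup β r α M₁ M₀ t₀ j (ℓ + 1))
      (β * j * (α j * Sup β r α M₁ M₀ t₀ (j + 1) ℓ s - Sup β r α M₁ M₀ t₀ j (ℓ + 1) s) + r j)
      s := by
  have h1 := (Iex_deriv β j ℓ hj (s - t₀)).comp_sub_const s t₀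
  have h := ((((h1.const_mul M₁).add ((Iex_deriv β j ℓ hj s).const_mul M₀)).const_mul
    (∏ i ∈ Finset.range (ℓ + 1), α (j + i))).add (Rem_deriv β hβ r α hα j ℓ hj s))
  refine (show HasDerivAt (Sup β r α M₁ M₀ t₀ j (ℓ + 1)) _ s from h).congr_deriv ?_
  unfold Sup
  rw [prod_shift]
  ring

theorem ode_hierarchy_bound_exp (β : ℝ) (hβ : 0 < β) (x x' : ℕ → ℝ → ℝ) (r α : ℕ → ℝ)
    (hx0 : ∀ k, 1 ≤ k → x k 0 = 0)
    (hxnonneg : ∀ k, 1 ≤ k → ∀ t : ℝ, 0 ≤ t → 0 ≤ x k t)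
    (hr : ∀ k, 1 ≤ k → 0 ≤ r k)
    (hα : ∀ k, 1 ≤ k → 0 < α k)
    (hderiv : ∀ k, 1 ≤ k → ∀ t : ℝ, 0 ≤ t → HasDerivWithinAt (x k) (x' k t) (Set.Ici 0) t)
    (hineq : ∀ k, 1 ≤ k → ∀ t : ℝ, 0 ≤ t →
      x' k t ≤ β * k * (α k * x (k + 1) t - x k t) + r k)
    (t₀ t : ℝ) (ht₀ : 0 ≤ t₀) (ht : t₀ ≤ t)
    (j ℓ : ℕ) (hj : 1 ≤ j) (hℓ : 1 ≤ ℓ)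
    (hjl : (j : ℝ) ≤ Real.exp (-(2 * β * t) - 6) * (ℓ : ℝ)) :
    x j t ≤ (∏ i ∈ Finset.range ℓ, α (j + i)) *
        Real.exp (-(Real.exp (-(2 * β * (t - t₀)) - 3) * (ℓ : ℝ))) *
        sSup (x (j + ℓ) '' Set.Icc t₀ t)
      + (∏ i ∈ Finset.range ℓ, α (j + i)) * Real.exp (2 * β * t + 7) *
          Real.exp (-(Real.exp (-(2 * β * t) - 7) * (ℓ : ℝ))) *
          sSup (x (j + ℓ) '' Set.Icc 0 t₀)
      + (1 / β) * ∑ k ∈ Finset.range ℓ,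
          (∏ i ∈ Finset.range (k + 1), α (j + i)) * Iex β j (k + 1) t *
            (r (j + k) / (α (j + k) * ((j : ℝ) + k))) := by
  set M₁ := sSup (x (j + ℓ) '' Set.Icc t₀ t) with hM₁
  set M₀ := sSup (x (j + ℓ) '' Set.Icc 0 t₀) with hM₀
  have ht0 : 0 ≤ t := ht₀.trans ht
  have hN : 1 ≤ j + ℓ := by omega
  have hcont : ContinuousOn (x (j + ℓ)) (Set.Ici 0) := fun s hs =>
    (hderiv _ hN s hs).continuousWithinAt
  have hle₁ : ∀ s ∈ Set.Icc t₀ t, x (j + ℓ) s ≤ M₁ := fun s hs =>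
    le_csSup (isCompact_Icc.bddAbove_image
      (hcont.mono fun u hu => ht₀.trans hu.1)) (Set.mem_image_of_mem _ hs)
  have hle₀ : ∀ s ∈ Set.Icc 0 t₀, x (j + ℓ) s ≤ M₀ := fun s hs =>
    le_csSup (isCompact_Icc.bddAbove_image
      (hcont.mono fun u hu => hu.1)) (Set.mem_image_of_mem _ hs)
  have hM₁0 : 0 ≤ M₁ := (hxnonneg _ hN t ht0).trans (hle₁ t ⟨ht, le_rfl⟩)
  have hM₀0 : 0 ≤ M₀ := (hxnonneg _ hN 0 le_rfl).trans (hle₀ 0 ⟨le_rfl, ht₀⟩)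
  have st1 := cmp_hier β hβ 0 t₀ (j + ℓ) r α hα (fun j _ s => x j s) (fun j _ s => x' j s)
    (Sup β r α 0 M₀ t₀) (by
      intro s hs
      simpa [Sup, Iex_zero, Rem] using hle₀ s hs) (by
      intro i n hi _
      simp [Sup, Rem_init, Iex_init, hx0 i hi])
    (fun i n hi _ s hs => hderiv i hi s hs.1)
    (fun i n hi _ s hs => hineq i hi s hs.1)
    (fun i n hi _ s _ => Sup_deriv β hβ r α hα 0 M₀ t₀ i n hi s)
  have st2 := cmp_hier β hβ t₀ t (j + ℓ) r α hα (fun j _ s => x j s) (fun j _ s => x' j s)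
    (Sup β r α M₁ M₀ t₀) (by
      intro s hs
      have := hle₁ s hs
      simp [Sup, Iex_zero, Rem]
      linarith) (by
      intro i n hi hin
      have := st1 (n + 1) i hi hin t₀ ⟨ht₀, le_rfl⟩
      simpa [Sup, Iex_init] using this)
    (fun i n hi _ s hs => (hderiv i hi s (ht₀.trans hs.1)).mono (Set.Ici_subset_Ici.2 ht₀))
    (fun i n hi _ s hs => hineq i hi s (ht₀.trans hs.1))
    (fun i n hi _ s _ => Sup_deriv β hβ r α hα M₁ M₀ t₀ i n hi s) ℓ j hj rfl t ⟨ht, le_rfl⟩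
  refine (show x j t ≤ _ from st2).trans ?_
  unfold Sup
  refine add_le_add ?_ (le_of_eq rfl)
  have hA : 0 ≤ ∏ i ∈ Finset.range ℓ, α (j + i) :=
    Finset.prod_nonneg fun i _ => (hα _ (by omega)).le
  have b1 := Iex_exp_le β hβ j ℓ hj t (t - t₀) (by linarith) (by linarith) hjl
  have b2 := Iex_exp_le β hβ j ℓ hj t t ht0 le_rfl hjl
  have b3 : Real.exp (-(Real.exp (-(2 * β * t) - 3) * (ℓ : ℝ))) ≤ Real.exp (2 * β * t + 7) *
      Real.exp (-(Real.exp (-(2 * β * t) - 7) * (ℓ : ℝ))) := by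
    rw [← Real.exp_add]
    apply Real.exp_le_exp.2
    have c1 : Real.exp (-(2 * β * t) - 7) ≤ Real.exp (-(2 * β * t) - 3) :=
      Real.exp_le_exp.2 (by linarith)
    have c2 := mul_le_mul_of_nonneg_right c1 (Nat.cast_nonneg (α := ℝ) ℓ)
    have c3 : 0 ≤ 2 * β * t := by positivity
    linarith
  have d1 := mul_le_mul_of_nonneg_left b1 (mul_nonneg hA hM₁0)
  have d2 := mul_le_mul_of_nonneg_left (b2.trans b3) (mul_nonneg hA hM₀0)
  linarith
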